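/- arXiv:1103.0370 — 3 statements merged into one kernel-verified Lean document; each statement's English description precedes it below -/
import Mathlib

section
/- Let p be a prime, let n be a non-negative integer, and let a₁ and a₂ be integers with gcd(a₁, p) = 1 and gcd(a₂, p) = 1. If rₙ(a₁, p) = rₙ(a₂, p), then a₁ ≡ a₂ (mod p) or a₁·a₂ ≡ 1 + 6·n² (mod p). -/
/-- The sawtooth function `((x))`: equal to `x - ⌊x⌋ - 1/2` if `x` is not an
integer, and `0` if `x` is an integer. -/
def sawtooth (x : ℚ) : ℚ := if Int.fract x = 0 then 0 else Int.fract x - 1/2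

/-- The Dedekind–Rademacher sum `rₙ(a,b) = ∑_{k=0}^{b-1} (((k·a+n)/b)) ((k/b))`. -/
def rademacherSum (n : ℕ) (a : ℤ) (b : ℕ) : ℚ :=
  ∑ k ∈ Finset.range b, sawtooth (((k : ℚ) * a + n) / b) * sawtooth ((k : ℚ) / b)

/-!
Since `((x)) = x - (⌊x⌋ + ⌈x⌉) / 2`, the combination `(((k a + n) / b)) - a ((k / b))` equals
`n / b - d k / 2` for an integer `d k`. As `k ↦ k a + n` permutes the residues modulo `b`, summing
over `k` gives `∑ d k = 2 n`, and summing squares gives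
`24 a b rₙ(a, b) = (a² + 1)(b - 1)(b - 2) + 12 n² - 3 b ∑ (d k)²`.
Here `∑ (d k)²` has the parity of `∑ d k = 2 n`, and `(a² + 1)(b - 3)` is even because `a` and `b`
are not both even, so halving the identity yields the integer congruence
`12 a b rₙ(a, b) ≡ a² + 1 + 6 n² (mod b)`. Eliminating `rₙ` between the congruences for `a₁` and
`a₂` gives `b ∣ (a₁ - a₂)(a₁ a₂ - 1 - 6 n²)`.
-/

open Finset

lemma sawtooth_add_one (x : ℚ) : sawtooth (x + 1) = sawtooth x := by
  simp [sawtooth]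

lemma sawtooth_eq_sub_floor_add_ceil (x : ℚ) : sawtooth x = x - (⌊x⌋ + ⌈x⌉ : ℤ) / 2 := by
  unfold sawtooth
  split_ifs with hx
  · obtain ⟨m, rfl⟩ := Int.fract_eq_zero_iff.mp hx
    simp
  · have hceil := (Int.ceil_eq_floor_add_one_iff_notMem x).mpr (mt Int.fract_eq_zero_iff.mpr hx)
    rw [hceil, Int.fract]
    push_cast
    ring

lemma sawtooth_neg (x : ℚ) : sawtooth (-x) = -sawtooth x := by
  simp only [sawtooth_eq_sub_floor_add_ceil, Int.floor_neg, Int.ceil_neg]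
  push_cast
  ring

/-- The integer `d` with `(((k a + n) / b)) - a ((k / b)) = n / b - d / 2`. The sum `⌊x⌋ + ⌈x⌉`
treats the two cases in the definition of the sawtooth function uniformly. -/
def sawtoothDefect (n : ℕ) (a : ℤ) (b k : ℕ) : ℤ :=
  ⌊((k : ℚ) * a + n) / b⌋ + ⌈((k : ℚ) * a + n) / b⌉ - a * (⌊(k : ℚ) / b⌋ + ⌈(k : ℚ) / b⌉)

lemma sawtooth_sub_mul_sawtooth (n : ℕ) (a : ℤ) (b k : ℕ) :
    sawtooth ((k * a + n) / b) - a * sawtooth (k / b) = n / b - sawtoothDefect n a b k / 2 := by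
  simp only [sawtooth_eq_sub_floor_add_ceil, sawtoothDefect]
  push_cast
  ring

lemma six_mul_sum_range_sub_sq {R : Type*} [CommRing R] (x : R) (m : ℕ) :
    6 * ∑ k ∈ range m, ((k : R) - x) ^ 2
      = m * ((m - 1) * (2 * m - 1) - 6 * x * (m - 1) + 6 * x ^ 2) := by
  induction m with
  | zero => simp
  | succ m ih =>
    rw [sum_range_succ, mul_add, ih]
    push_cast
    ring

lemma even_sq_add_one_mul_sub_three {a b : ℤ} (hab : IsCoprime a b) :
    Even ((a ^ 2 + 1) * (b - 3)) := by
  have hodd : Odd a ∨ Odd b := by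
    by_contra! h
    rw [Int.not_odd_iff_even, Int.not_odd_iff_even] at h
    exact absurd (hab.isUnit_of_dvd' h.1.two_dvd h.2.two_dvd) (by decide)
  rcases hodd with ha | hb
  · exact (ha.pow.add_one).mul_right _
  · exact (hb.sub_odd (by decide)).mul_left _

variable {b : ℕ} [NeZero b]

lemma sum_range_natCast_zmod {M : Type*} [AddCommMonoid M] (g : ZMod b → M) :
    ∑ k ∈ range b, g k = ∑ x, g x :=
  sum_nbij' (fun k ↦ (k : ZMod b)) ZMod.val (by simp) (by simp [ZMod.val_lt])
    (fun _ hk ↦ ZMod.val_cast_of_lt (mem_range.mp hk)) (by simp) (by simp)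

lemma sum_range_mul_add_of_periodic {M : Type*} [AddCommMonoid M] {f : ℤ → M}
    (hf : Function.Periodic f b) {a : ℤ} (ha : IsCoprime a b) (n : ℤ) :
    ∑ k ∈ range b, f (k * a + n) = ∑ k ∈ range b, f k := by
  let g : ZMod b → M := fun x ↦ f x.val
  have hg (m : ℤ) : g m = f m := by
    simp only [g, ZMod.val_intCast, Int.emod_def, mul_comm (b : ℤ)]
    exact hf.sub_int_mul_eq _
  have hunit : IsUnit (a : ZMod b) := (ZMod.coe_int_isUnit_iff_isCoprime a b).mpr ha.symm
  let e : ZMod b ≃ ZMod b := hunit.unit.mulRight.trans (Equiv.addRight (n : ZMod b))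
  calc ∑ k ∈ range b, f (k * a + n) = ∑ k ∈ range b, g (e k) :=
        sum_congr rfl fun k _ ↦ by simp [e, ← hg]
    _ = ∑ x, g (e x) := sum_range_natCast_zmod (g ∘ e)
    _ = ∑ x, g x := e.sum_comp g
    _ = ∑ k ∈ range b, g k := (sum_range_natCast_zmod g).symm
    _ = ∑ k ∈ range b, f k := sum_congr rfl fun k _ ↦ by simpa using hg k

lemma periodic_sawtooth_div : Function.Periodic (fun m : ℤ ↦ sawtooth (m / b)) b := by
  intro m
  have hb : (b : ℚ) ≠ 0 := NeZero.ne _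
  simp [add_div, hb, sawtooth_add_one]

lemma sum_comp_sawtooth_mul_add_div {M : Type*} [AddCommMonoid M] (g : ℚ → M) {a : ℤ}
    (ha : IsCoprime a b) (n : ℤ) :
    ∑ k ∈ range b, g (sawtooth ((k * a + n) / b)) = ∑ k ∈ range b, g (sawtooth (k / b)) := by
  simpa using sum_range_mul_add_of_periodic (periodic_sawtooth_div.comp g) ha n

lemma sum_sawtooth_div : ∑ k ∈ range b, sawtooth (k / b) = 0 := by
  have hreflect := sum_comp_sawtooth_mul_add_div (b := b) id isCoprime_one_left.neg_left 0
  have hodd (k : ℕ) : sawtooth ((k * (-1 : ℤ) + (0 : ℤ)) / b) = -sawtooth (k / b) := by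
    simp [neg_div, sawtooth_neg]
  simp only [id, hodd, sum_neg_distrib] at hreflect
  linarith

lemma sum_sawtooth_div_sq :
    ∑ k ∈ range b, sawtooth (k / b) ^ 2 = ((b - 1) * (b - 2) / (12 * b) : ℚ) := by
  have hb : (b : ℚ) ≠ 0 := NeZero.ne _
  have hterm (k : ℕ) (hk : k ∈ range b) :
      sawtooth (k / b) ^ 2 = (k - b / 2 : ℚ) ^ 2 / b ^ 2 - if k = 0 then 1 / 4 else 0 := by
    have hlt : (k : ℚ) < b := by exact_mod_cast mem_range.mp hk
    have hfract : Int.fract (k / b : ℚ) = k / b :=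
      Int.fract_eq_self.mpr ⟨by positivity, (div_lt_one (by positivity)).mpr hlt⟩
    rw [sawtooth, hfract]
    rcases eq_or_ne k 0 with rfl | hk0
    · simp only [Nat.cast_zero, zero_div, if_true]
      field_simp
      norm_num
    · simp only [div_eq_zero_iff, Nat.cast_eq_zero, hk0, hb, or_self, if_false]
      field_simp
      ring
  have hsq : ∑ k ∈ range b, (k - b / 2 : ℚ) ^ 2 = b * (b ^ 2 + 2) / 12 := by
    linear_combination six_mul_sum_range_sub_sq (b / 2 : ℚ) b / 6
  have hmem : 0 ∈ range b := mem_range.mpr (NeZero.pos b)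
  rw [sum_congr rfl hterm, sum_sub_distrib, ← sum_div, sum_ite_eq', if_pos hmem, hsq]
  field_simp
  ring

lemma sum_sawtoothDefect (n : ℕ) {a : ℤ} (ha : IsCoprime a b) :
    ∑ k ∈ range b, sawtoothDefect n a b k = 2 * n := by
  have hb : (b : ℚ) ≠ 0 := NeZero.ne _
  have hshift : ∑ k ∈ range b, sawtooth ((k * a + n) / b) = 0 :=
    (sum_comp_sawtooth_mul_add_div id ha n).trans sum_sawtooth_div
  have hsum : ∑ k ∈ range b, (sawtooth ((k * a + n) / b) - a * sawtooth (k / b))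
      = ∑ k ∈ range b, (n / b - sawtoothDefect n a b k / 2 : ℚ) :=
    sum_congr rfl fun k _ ↦ sawtooth_sub_mul_sawtooth n a b k
  simp only [sum_sub_distrib, ← mul_sum, ← sum_div, hshift, sum_sawtooth_div, sum_const,
    card_range, nsmul_eq_mul, mul_div_cancel_left₀ _ hb] at hsum
  qify
  linarith

lemma even_sum_sawtoothDefect_sq (n : ℕ) {a : ℤ} (ha : IsCoprime a b) :
    Even (∑ k ∈ range b, sawtoothDefect n a b k ^ 2) := by
  have hdiff : Even (∑ k ∈ range b, (sawtoothDefect n a b k ^ 2 - sawtoothDefect n a b k)) :=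
    even_sum _ fun k _ ↦ by
      simpa [sq, mul_sub] using Int.even_mul_pred_self (sawtoothDefect n a b k)
  rw [sum_sub_distrib, sum_sawtoothDefect n ha] at hdiff
  simpa [Int.even_sub] using hdiff

lemma mul_rademacherSum_eq_sum_sawtoothDefect_sq (n : ℕ) {a : ℤ} (ha : IsCoprime a b) :
    24 * a * b * rademacherSum n a b = (a ^ 2 + 1) * (b - 1) * (b - 2) + 12 * n ^ 2
        - 3 * b * ∑ k ∈ range b, (sawtoothDefect n a b k : ℚ) ^ 2 := by
  have hb : (b : ℚ) ≠ 0 := NeZero.ne _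
  have hshift : ∑ k ∈ range b, sawtooth ((k * a + n) / b) ^ 2 = (b - 1) * (b - 2) / (12 * b) :=
    (sum_comp_sawtooth_mul_add_div (· ^ 2) ha n).trans sum_sawtooth_div_sq
  have hdefect : ∑ k ∈ range b, (sawtoothDefect n a b k : ℚ) = 2 * n := by
    exact_mod_cast sum_sawtoothDefect n ha
  have hterm (k : ℕ) : 2 * a * (sawtooth ((k * a + n) / b) * sawtooth (k / b))
      = sawtooth ((k * a + n) / b) ^ 2 + a ^ 2 * sawtooth (k / b) ^ 2
        - (n ^ 2 / b ^ 2 - n / b * sawtoothDefect n a b k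
          + (sawtoothDefect n a b k : ℚ) ^ 2 / 4) := by
    linear_combination -(sawtooth ((k * a + n) / b) - a * sawtooth (k / b)
      + n / b - sawtoothDefect n a b k / 2) * sawtooth_sub_mul_sawtooth n a b k
  have hsum : 2 * a * rademacherSum n a b = (a ^ 2 + 1) * ((b - 1) * (b - 2) / (12 * b))
      + n ^ 2 / b - (∑ k ∈ range b, (sawtoothDefect n a b k : ℚ) ^ 2) / 4 := by
    rw [rademacherSum, mul_sum, sum_congr rfl fun k _ ↦ hterm k]
    simp only [sum_sub_distrib, sum_add_distrib, ← mul_sum, ← sum_div, sum_const, card_range,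
      nsmul_eq_mul, hshift, sum_sawtooth_div_sq, hdefect]
    field_simp
    ring
  field_simp at hsum
  linear_combination hsum / 4

lemma exists_mul_rademacherSum_eq_add_mul (n : ℕ) {a : ℤ} (ha : IsCoprime a b) :
    ∃ u : ℤ, 12 * a * b * rademacherSum n a b = (a ^ 2 + 1 + 6 * n ^ 2 + b * u : ℤ) := by
  obtain ⟨v, hv⟩ := even_sq_add_one_mul_sub_three ha
  obtain ⟨w, hw⟩ := even_sum_sawtoothDefect_sq n ha
  refine ⟨v - 3 * w, ?_⟩
  qify at hv hw
  push_cast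
  linear_combination mul_rademacherSum_eq_sum_sawtoothDefect_sq n ha / 2 + b / 2 * hv
    - 3 * b / 2 * hw

theorem rademacherSum_eq_imp_of_prime_general (n : ℕ) {a₁ a₂ : ℤ} (h₁ : IsCoprime a₁ b)
    (h₂ : IsCoprime a₂ b) (h : rademacherSum n a₁ b = rademacherSum n a₂ b) :
    (b : ℤ) ∣ (a₁ - a₂) * (a₁ * a₂ - (1 + 6 * (n : ℤ) ^ 2)) := by
  obtain ⟨u₁, hu₁⟩ := exists_mul_rademacherSum_eq_add_mul n h₁
  obtain ⟨u₂, hu₂⟩ := exists_mul_rademacherSum_eq_add_mul n h₂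
  refine ⟨a₁ * u₂ - a₂ * u₁, ?_⟩
  rw [h] at hu₁
  qify
  push_cast at hu₁ hu₂
  linear_combination a₁ * hu₂ - a₂ * hu₁

theorem rademacherSum_eq_imp_of_prime (p : ℕ) (hp : p.Prime) (n : ℕ) (a₁ a₂ : ℤ)
    (h₁ : Int.gcd a₁ p = 1) (h₂ : Int.gcd a₂ p = 1)
    (h : rademacherSum n a₁ p = rademacherSum n a₂ p) :
    a₁ ≡ a₂ [ZMOD (p : ℤ)] ∨ a₁ * a₂ ≡ 1 + 6 * (n : ℤ) ^ 2 [ZMOD (p : ℤ)] := by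
  have : NeZero p := ⟨hp.ne_zero⟩
  rw [← Int.isCoprime_iff_gcd_eq_one] at h₁ h₂
  exact ((Nat.prime_iff_prime_int.mp hp).dvd_or_dvd
    (rademacherSum_eq_imp_of_prime_general n h₁ h₂ h)).imp
    (Int.modEq_iff_dvd.mpr · |>.symm) (Int.modEq_iff_dvd.mpr · |>.symm)
end

section
/- For any positive integer b and any integer a with gcd(a, b) = 1, the rational number 6·b·s(a, b) is an integer. -/
/-- The classical Dedekind sum `s(a,b) = ∑_{k=0}^{b-1} ((k·a/b)) ((k/b))`. -/
def dedekindSum (a : ℤ) (b : ℕ) : ℚ :=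
  ∑ k ∈ Finset.range b, sawtooth ((k : ℚ) * a / b) * sawtooth ((k : ℚ) / b)

/-!
Since `((x)) = x - (⌊x⌋ + ⌈x⌉) / 2`, the sawtooth is odd, has period `1`, and differs from `x` by
half an integer. Reflecting `k ↦ b - k` shows that `∑ ((ka/b))` vanishes, so in `s(a, b)` the
factor `((k/b)) = k/b - 1/2` (for `0 < k`) may be replaced by `k/b`. Hence
`6bs(a, b) = ∑ 6k((ka/b))`, which is an integer plus `(a/b) ∑ 6k²`, and
`∑ 6k² = b(b - 1)(2b - 1)` is divisible by `b`.
-/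

open Finset

theorem six_mul_sum_range_sq {R : Type*} [CommRing R] (n : ℕ) :
    6 * ∑ k ∈ range n, (k : R) ^ 2 = n * (n - 1) * (2 * n - 1) := by
  induction n with
  | zero => simp
  | succ n ih =>
    rw [sum_range_succ, mul_add, ih]
    push_cast
    ring

theorem sum_range_mul_div_eq_zero_of_odd_of_periodic {K M : Type*} [Field K] [AddCommGroup M]
    [IsAddTorsionFree M] {f : K → M} (hodd : f.Odd) (hper : f.Periodic 1) (a : ℤ) {b : ℕ}
    (hb : (b : K) ≠ 0) :
    ∑ k ∈ range b, f (k * a / b) = 0 := by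
  have last_eq_zero : f (b * a / b) = 0 := by
    rw [mul_div_cancel_left₀ _ hb]
    simpa [hodd.map_zero] using hper.int_mul_eq a
  have reflect : ∀ k ∈ range (b + 1), f ((b + 1 - 1 - k : ℕ) * a / b) = -f (k * a / b) := by
    intro k hk
    rw [Nat.add_sub_cancel, Nat.cast_sub (Nat.lt_succ_iff.mp (mem_range.mp hk)), ← hodd, sub_mul,
      sub_div, mul_div_cancel_left₀ _ hb]
    simpa using hper.int_mul_sub_eq (x := (k * a / b : K)) a
  have eq_neg : ∑ k ∈ range (b + 1), f (k * a / b) = -∑ k ∈ range (b + 1), f (k * a / b) := by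
    rw [← sum_neg_distrib, ← sum_congr rfl reflect]
    exact (sum_range_reflect (fun k : ℕ ↦ f (k * a / b)) (b + 1)).symm
  rwa [self_eq_neg, sum_range_succ, last_eq_zero, add_zero] at eq_neg

theorem sawtooth_eq_sub_floor_add_ceil_div_two (x : ℚ) :
    sawtooth x = x - (⌊x⌋ + ⌈x⌉) / 2 := by
  unfold sawtooth
  split_ifs with hx
  · obtain ⟨n, rfl⟩ := Int.fract_eq_zero_iff.mp hx
    simp
  · have hceil : ⌈x⌉ = ⌊x⌋ + 1 :=
      (Int.ceil_eq_floor_add_one_iff_notMem x).mpr (mt Int.fract_eq_zero_iff.mpr hx)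
    rw [hceil, Int.fract]
    push_cast
    ring

theorem sawtooth_odd : sawtooth.Odd := by
  intro x
  simp only [sawtooth_eq_sub_floor_add_ceil_div_two, Int.floor_neg, Int.ceil_neg]
  push_cast
  ring

theorem sawtooth_periodic : sawtooth.Periodic 1 := by
  intro x
  simp only [sawtooth_eq_sub_floor_add_ceil_div_two, Int.floor_add_one, Int.ceil_add_one]
  push_cast
  ring

theorem sawtooth_of_pos_of_lt_one {x : ℚ} (h0 : 0 < x) (h1 : x < 1) : sawtooth x = x - 1 / 2 := by
  have hfract : Int.fract x = x := Int.fract_eq_self.mpr ⟨h0.le, h1⟩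
  rw [sawtooth, hfract, if_neg h0.ne']

theorem dedekindSum_eq_sum_sawtooth_mul_div (a : ℤ) {b : ℕ} (hb : 0 < b) :
    dedekindSum a b = ∑ k ∈ range b, sawtooth (k * a / b) * (k / b) := by
  have hb' : (0 : ℚ) < b := Nat.cast_pos.mpr hb
  have term (k : ℕ) (hk : k ∈ range b) : sawtooth (k * a / b) * sawtooth (k / b) =
      sawtooth (k * a / b) * (k / b) - sawtooth (k * a / b) * (1 / 2) := by
    obtain rfl | hk0 := k.eq_zero_or_pos
    · simp [sawtooth_odd.map_zero]
    · have hlt : (k / b : ℚ) < 1 := (div_lt_one hb').mpr (Nat.cast_lt.mpr (mem_range.mp hk))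
      rw [sawtooth_of_pos_of_lt_one (div_pos (Nat.cast_pos.mpr hk0) hb') hlt, mul_sub]
  rw [dedekindSum, sum_congr rfl term, sum_sub_distrib, ← sum_mul,
    sum_range_mul_div_eq_zero_of_odd_of_periodic sawtooth_odd sawtooth_periodic a hb'.ne',
    zero_mul, sub_zero]

theorem six_mul_dedekindSum_eq (a : ℤ) {b : ℕ} (hb : 0 < b) :
    6 * b * dedekindSum a b = a * (b - 1) * (2 * b - 1) -
      3 * ∑ k ∈ range b, (k : ℚ) * (⌊(k * a / b : ℚ)⌋ + ⌈(k * a / b : ℚ)⌉) := by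
  have hb' : (b : ℚ) ≠ 0 := Nat.cast_ne_zero.mpr hb.ne'
  have term (k : ℕ) : 6 * b * (sawtooth (k * a / b) * (k / b)) =
      a / b * (6 * (k : ℚ) ^ 2) - 3 * (k * (⌊(k * a / b : ℚ)⌋ + ⌈(k * a / b : ℚ)⌉)) := by
    rw [sawtooth_eq_sub_floor_add_ceil_div_two]
    field_simp
    ring
  calc
    6 * b * dedekindSum a b = a / b * (6 * ∑ k ∈ range b, (k : ℚ) ^ 2) -
        3 * ∑ k ∈ range b, (k : ℚ) * (⌊(k * a / b : ℚ)⌋ + ⌈(k * a / b : ℚ)⌉) := by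
      simp only [dedekindSum_eq_sum_sawtooth_mul_div a hb, mul_sum, term, sum_sub_distrib]
    _ = _ := by
      rw [six_mul_sum_range_sq]
      field_simp

theorem six_mul_dedekindSum_isInt_general (b : ℕ) (hb : 0 < b) (a : ℤ) :
    ∃ m : ℤ, 6 * (b : ℚ) * dedekindSum a b = (m : ℚ) := by
  refine ⟨a * (b - 1) * (2 * b - 1) -
    3 * ∑ k ∈ range b, (k : ℤ) * (⌊(k * a / b : ℚ)⌋ + ⌈(k * a / b : ℚ)⌉), ?_⟩
  rw [six_mul_dedekindSum_eq a hb]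
  push_cast
  rfl

theorem six_mul_dedekindSum_isInt (b : ℕ) (hb : 0 < b) (a : ℤ)
    (h : Int.gcd a b = 1) :
    ∃ m : ℤ, 6 * (b : ℚ) * dedekindSum a b = (m : ℚ) :=
  six_mul_dedekindSum_isInt_general b hb a
end

section
/- Let b, a₁, a₂ be positive integers with gcd(a₁, b) = 1 and gcd(a₂, b) = 1. If s(a₁, b) = s(a₂, b), then 12·a₁·a₂·b·s(b, a₁) − 12·a₁·a₂·b·s(b, a₂) = a₁²·a₂ + b²·a₂ − b²·a₁ + a₂ − a₂²·a₁ − a₁. -/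
/-!
Everything reduces to Dedekind's reciprocity law
`12 a b (s(a, b) + s(b, a)) = a² + b² + 1 - 3 a b`. Since the sawtooth averages to zero over the
residues, `b s(a, b)` is, up to power sums, `-∑ k ⌊k a / b⌋`. Counting the points of the rectangle
`0 < j < a`, `0 ≤ k < b` on either side of its diagonal, each weighted by `k`, turns that sum into
one of `⌊j b / a⌋` and `⌊j b / a⌋²`; and because `j ↦ j b mod a` permutes the residues, comparing
second moments expresses `∑ ⌊j b / a⌋²` through `∑ j ⌊j b / a⌋`, which belongs to `s(b, a)`.
-/

section

open Finset

theorem sum_range_comp_mul_mod {M : Type*} [AddCommMonoid M] {a b : ℕ} (h : a.Coprime b)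
    (f : ℕ → M) : ∑ k ∈ range b, f (k * a % b) = ∑ k ∈ range b, f k := by
  have mapsTo : Set.MapsTo (fun k ↦ k * a % b) (range b) (range b) := fun k hk ↦
    mem_coe.2 <| mem_range.2 <| Nat.mod_lt _ <| Nat.zero_lt_of_lt <| mem_range.1 <| mem_coe.1 hk
  have injOn : Set.InjOn (fun k ↦ k * a % b) (range b) := fun x hx y hy hxy ↦
    (Nat.ModEq.cancel_right_of_coprime h.symm hxy).eq_of_lt_of_lt
      (mem_range.1 hx) (mem_range.1 hy)
  exact sum_nbij _ mapsTo injOn (surjOn_of_injOn_of_card_le _ mapsTo injOn le_rfl) fun _ _ ↦ rfl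

theorem card_filter_Ico_mul_le_mul (a : ℕ) {b k : ℕ} (hk : k < b) :
    #{j ∈ Ico 1 a | j * b ≤ k * a} = k * a / b := by
  have filter_eq : {j ∈ Ico 1 a | j * b ≤ k * a} = Ioc 0 (k * a / b) := by
    ext j
    simp only [mem_filter, mem_Ico, mem_Ioc, Nat.le_div_iff_mul_le (Nat.zero_lt_of_lt hk),
      Nat.succ_le_iff]
    refine ⟨fun hj ↦ ⟨hj.1.1, hj.2⟩, fun ⟨hj, hjk⟩ ↦ ⟨⟨hj, ?_⟩, hjk⟩⟩
    by_contra! haj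
    nlinarith
  rw [filter_eq, Nat.card_Ioc, Nat.sub_zero]

theorem filter_range_mul_lt_mul {a b j : ℕ} (h : a.Coprime b) (hj : j ∈ Ico 1 a) :
    {k ∈ range b | k * a < j * b} = range (j * b / a + 1) := by
  obtain ⟨hj₁, hja⟩ := mem_Ico.1 hj
  have ne_diagonal (k : ℕ) : k * a ≠ j * b := fun hk ↦
    Nat.not_dvd_of_pos_of_lt hj₁ hja (h.dvd_of_dvd_mul_right (Dvd.intro_left k hk))
  ext k
  simp only [mem_filter, mem_range, Order.lt_add_one_iff,
    Nat.le_div_iff_mul_le (Nat.zero_lt_of_lt hja)]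
  refine ⟨fun hk ↦ hk.2.le, fun hk ↦ ⟨?_, hk.lt_of_ne (ne_diagonal k)⟩⟩
  by_contra! hbk
  have := hk.lt_of_ne (ne_diagonal k)
  nlinarith

theorem sum_div_nsmul_add_sum_sum_range {M : Type*} [AddCommMonoid M] {a b : ℕ}
    (h : a.Coprime b) (f : ℕ → M) :
    ∑ k ∈ range b, (k * a / b) • f k + ∑ j ∈ Ico 1 a, ∑ k ∈ range (j * b / a + 1), f k =
      (a - 1) • ∑ k ∈ range b, f k := by
  have below : ∑ k ∈ range b, (k * a / b) • f k =
      ∑ j ∈ Ico 1 a, ∑ k ∈ range b with j * b ≤ k * a, f k := by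
    simp only [sum_filter]
    rw [sum_comm]
    refine sum_congr rfl fun k hk ↦ ?_
    rw [← sum_filter, sum_const, card_filter_Ico_mul_le_mul a (mem_range.1 hk)]
  have above : ∑ j ∈ Ico 1 a, ∑ k ∈ range (j * b / a + 1), f k =
      ∑ j ∈ Ico 1 a, ∑ k ∈ range b with ¬ j * b ≤ k * a, f k := by
    refine sum_congr rfl fun j hj ↦ ?_
    simp only [not_le, filter_range_mul_lt_mul h hj]
  rw [below, above, ← sum_add_distrib]
  simp only [sum_filter_add_sum_filter_not, sum_const, Nat.card_Ico]

theorem natCast_mod_eq_sub {R : Type*} [CommRing R] (m n : ℕ) :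
    ((m % n : ℕ) : R) = m - n * (m / n : ℕ) := by
  rw [eq_sub_iff_add_eq]
  exact_mod_cast congrArg (Nat.cast (R := R)) (Nat.mod_add_div m n)

section FloorSums

variable {K : Type*} [Field K] [CharZero K]

theorem sum_range_natCast (n : ℕ) : ∑ k ∈ range n, (k : K) = n * (n - 1) / 2 := by
  rw [← Nat.cast_sum, sum_range_id, ← Nat.choose_two_right, Nat.cast_choose_two]

theorem sum_range_natCast_sq (n : ℕ) :
    ∑ k ∈ range n, (k : K) ^ 2 = n * (n - 1) * (2 * n - 1) / 6 := by
  induction n with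
  | zero => simp
  | succ n ih =>
    rw [sum_range_succ, ih]
    push_cast
    ring

theorem sum_range_mul_div {a b : ℕ} (hb : 0 < b) (h : a.Coprime b) :
    ∑ k ∈ range b, ((k * a / b : ℕ) : K) = (a - 1) * (b - 1) / 2 := by
  have first_moment := sum_range_comp_mul_mod h fun k ↦ (k : K)
  simp only [natCast_mod_eq_sub, Nat.cast_mul, sum_sub_distrib, ← mul_sum, ← sum_mul,
    sum_range_natCast] at first_moment
  apply mul_left_cancel₀ (Nat.cast_ne_zero.2 hb.ne' : (b : K) ≠ 0)
  linear_combination -first_moment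

theorem sq_mul_sum_range_mul_div_sq {a b : ℕ} (h : a.Coprime b) :
    (b : K) ^ 2 * ∑ k ∈ range b, ((k * a / b : ℕ) : K) ^ 2 =
      2 * a * b * ∑ k ∈ range b, (k : K) * (k * a / b : ℕ) +
        (1 - a ^ 2) * (b * (b - 1) * (2 * b - 1) / 6) := by
  have mod_sq (k : ℕ) : ((k * a % b : ℕ) : K) ^ 2 = a ^ 2 * k ^ 2 -
      2 * a * b * (k * (k * a / b : ℕ)) + b ^ 2 * ((k * a / b : ℕ) : K) ^ 2 := by
    rw [natCast_mod_eq_sub]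
    push_cast
    ring
  have second_moment := sum_range_comp_mul_mod h fun k ↦ (k : K) ^ 2
  simp only [mod_sq, sum_add_distrib, sum_sub_distrib, ← mul_sum,
    sum_range_natCast_sq] at second_moment
  linear_combination second_moment

theorem sum_range_mul_mul_div_add_half_sum {a b : ℕ} (ha : 0 < a) (h : a.Coprime b) :
    ∑ k ∈ range b, (k : K) * (k * a / b : ℕ) +
        (∑ j ∈ range a, ((j * b / a : ℕ) : K) ^ 2 + ∑ j ∈ range a, ((j * b / a : ℕ) : K)) / 2 =
      (a - 1) * (b * (b - 1) / 2) := by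
  have triangular (q : ℕ) : ∑ k ∈ range (q + 1), (k : K) = ((q : K) ^ 2 + q) / 2 := by
    rw [sum_range_natCast]
    push_cast
    ring
  have triangular_sum : ∑ j ∈ Ico 1 a, ∑ k ∈ range (j * b / a + 1), (k : K) =
      (∑ j ∈ range a, ((j * b / a : ℕ) : K) ^ 2 + ∑ j ∈ range a, ((j * b / a : ℕ) : K)) / 2 := by
    rw [← sum_add_distrib, sum_div, range_eq_Ico, sum_eq_sum_Ico_succ_bot ha]
    simp [triangular]
  have lattice_count := sum_div_nsmul_add_sum_sum_range h fun k ↦ (k : K)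
  rw [triangular_sum, sum_range_natCast, nsmul_eq_mul, Nat.cast_pred ha] at lattice_count
  simpa only [nsmul_eq_mul, mul_comm] using lattice_count

theorem sum_range_mul_mul_div_reciprocity {a b : ℕ} (ha : 0 < a) (h : a.Coprime b) :
    (a : K) * ∑ k ∈ range b, (k : K) * (k * a / b : ℕ) +
        b * ∑ j ∈ range a, (j : K) * (j * b / a : ℕ) =
      (a - 1) * (b - 1) * (8 * a * b - a - b - 1) / 12 := by
  have lattice_count := sum_range_mul_mul_div_add_half_sum (K := K) ha h
  rw [sum_range_mul_div ha h.symm] at lattice_count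
  have second_moment := sq_mul_sum_range_mul_div_sq (K := K) h.symm
  apply mul_left_cancel₀ (Nat.cast_ne_zero.2 ha.ne' : (a : K) ≠ 0)
  linear_combination (a : K) ^ 2 * lattice_count - second_moment / 2

end FloorSums

@[simp]
theorem sawtooth_zero : sawtooth 0 = 0 := by
  simp [sawtooth]

theorem sawtooth_of_not_dvd {m n : ℕ} (hn : n ≠ 0) (h : ¬ n ∣ m) :
    sawtooth ((m : ℚ) / n) = (m : ℚ) / n - (m / n : ℕ) - 1 / 2 := by
  have hn' : (n : ℚ) ≠ 0 := Nat.cast_ne_zero.2 hn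
  have mod_ne_zero : ((m % n : ℕ) : ℚ) / n ≠ 0 :=
    div_ne_zero (Nat.cast_ne_zero.2 fun hm ↦ h (Nat.dvd_of_mod_eq_zero hm)) hn'
  rw [sawtooth, Int.fract_div_natCast_eq_div_natCast_mod, if_neg mod_ne_zero, natCast_mod_eq_sub]
  field_simp

theorem sawtooth_mod_div (m n : ℕ) :
    sawtooth (((m % n : ℕ) : ℚ) / n) = sawtooth ((m : ℚ) / n) := by
  simp only [sawtooth, Int.fract_div_natCast_eq_div_natCast_mod, Nat.mod_mod]

theorem sawtooth_div_of_pos_of_lt {k b : ℕ} (hk : 0 < k) (hkb : k < b) :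
    sawtooth ((k : ℚ) / b) = (k : ℚ) / b - 1 / 2 := by
  rw [sawtooth_of_not_dvd (hk.trans hkb).ne' (Nat.not_dvd_of_pos_of_lt hk hkb),
    Nat.div_eq_of_lt hkb, Nat.cast_zero, sub_zero]

theorem sum_range_sawtooth_div (b : ℕ) : ∑ k ∈ range b, sawtooth ((k : ℚ) / b) = 0 := by
  rcases b with _ | n
  · simp
  · have term_eq (k : ℕ) (hk : k ∈ range n) : sawtooth (((k + 1 : ℕ) : ℚ) / (n + 1 : ℕ)) =
        (k + 1) / (n + 1) - 1 / 2 := by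
      rw [sawtooth_div_of_pos_of_lt k.succ_pos (Nat.succ_lt_succ (mem_range.1 hk))]
      push_cast
      rfl
    rw [sum_range_succ', sum_congr rfl term_eq]
    simp only [sum_sub_distrib, ← sum_div, sum_add_distrib, sum_range_natCast, sum_const,
      card_range, nsmul_eq_mul, Nat.cast_zero, zero_div, sawtooth_zero]
    field_simp
    ring

theorem sum_range_sawtooth_mul_div {a b : ℕ} (h : a.Coprime b) :
    ∑ k ∈ range b, sawtooth ((k : ℚ) * a / b) = 0 := by
  have permuted := sum_range_comp_mul_mod h fun k ↦ sawtooth ((k : ℚ) / b)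
  simpa only [sawtooth_mod_div, Nat.cast_mul, sum_range_sawtooth_div] using permuted

theorem dedekindSum_eq_sum_sub_half (a : ℤ) (b : ℕ) :
    dedekindSum a b = ∑ k ∈ range b, sawtooth ((k : ℚ) * a / b) * ((k : ℚ) / b - 1 / 2) := by
  refine sum_congr rfl fun k hk ↦ ?_
  rcases k.eq_zero_or_pos with rfl | hk₀
  · simp
  · rw [sawtooth_div_of_pos_of_lt hk₀ (mem_range.1 hk)]

theorem mul_dedekindSum_eq_sum_mul_sawtooth {a b : ℕ} (hb : 0 < b) (h : a.Coprime b) :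
    (b : ℚ) * dedekindSum a b = ∑ k ∈ range b, (k : ℚ) * sawtooth ((k : ℚ) * a / b) := by
  have hb' : (b : ℚ) ≠ 0 := Nat.cast_ne_zero.2 hb.ne'
  simp only [dedekindSum_eq_sum_sub_half, Int.cast_natCast, mul_sub, sum_sub_distrib, ← sum_mul,
    sum_range_sawtooth_mul_div h, zero_mul, sub_zero, mul_sum]
  refine sum_congr rfl fun k _ ↦ ?_
  field_simp

theorem mul_dedekindSum_eq_sub_sum_mul_div {a b : ℕ} (hb : 0 < b) (h : a.Coprime b) :
    (b : ℚ) * dedekindSum a b = a * (b - 1) * (2 * b - 1) / 6 - b * (b - 1) / 4 -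
      ∑ k ∈ range b, (k : ℚ) * (k * a / b : ℕ) := by
  have hb' : (b : ℚ) ≠ 0 := Nat.cast_ne_zero.2 hb.ne'
  have term_eq (k : ℕ) (hk : k ∈ range b) : (k : ℚ) * sawtooth ((k : ℚ) * a / b) =
      a / b * k ^ 2 - k * (k * a / b : ℕ) - k / 2 := by
    rcases k.eq_zero_or_pos with rfl | hk₀
    · simp
    · have not_dvd : ¬ b ∣ k * a := fun hdvd ↦
        Nat.not_dvd_of_pos_of_lt hk₀ (mem_range.1 hk) (h.symm.dvd_of_dvd_mul_right hdvd)
      rw [← Nat.cast_mul, sawtooth_of_not_dvd hb.ne' not_dvd]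
      push_cast
      ring
  rw [mul_dedekindSum_eq_sum_mul_sawtooth hb h, sum_congr rfl term_eq]
  simp only [sum_sub_distrib, ← mul_sum, ← sum_div, sum_range_natCast, sum_range_natCast_sq]
  field_simp
  ring

theorem dedekindSum_reciprocity {a b : ℕ} (ha : 0 < a) (hb : 0 < b) (h : a.Coprime b) :
    12 * (a : ℚ) * b * (dedekindSum a b + dedekindSum b a) = a ^ 2 + b ^ 2 + 1 - 3 * a * b := by
  have sum_ab := mul_dedekindSum_eq_sub_sum_mul_div hb h
  have sum_ba := mul_dedekindSum_eq_sub_sum_mul_div ha h.symm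
  have floor_reciprocity := sum_range_mul_mul_div_reciprocity (K := ℚ) ha h
  linear_combination 12 * (a : ℚ) * sum_ab + 12 * (b : ℚ) * sum_ba - 12 * floor_reciprocity

end

theorem dedekindSum_eq_imp_identity (b a₁ a₂ : ℕ) (hb : 0 < b)
    (ha₁ : 0 < a₁) (ha₂ : 0 < a₂)
    (h₁ : Nat.gcd a₁ b = 1) (h₂ : Nat.gcd a₂ b = 1)
    (h : dedekindSum a₁ b = dedekindSum a₂ b) :
    12 * (a₁ : ℚ) * a₂ * b * dedekindSum b a₁
        - 12 * (a₁ : ℚ) * a₂ * b * dedekindSum b a₂ =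
      (a₁ : ℚ) ^ 2 * a₂ + (b : ℚ) ^ 2 * a₂ - (b : ℚ) ^ 2 * a₁ + a₂
        - (a₂ : ℚ) ^ 2 * a₁ - a₁ := by
  have reciprocity₁ := dedekindSum_reciprocity ha₁ hb h₁
  have reciprocity₂ := dedekindSum_reciprocity ha₂ hb h₂
  rw [h] at reciprocity₁
  linear_combination (a₂ : ℚ) * reciprocity₁ - (a₁ : ℚ) * reciprocity₂
end
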